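/- Let μ, ν be Borel probability measures on ℝ with finite first moments and μ ≤_cd ν. Fix u, v ∈ (0,1) with u < v, let S_u be a shadow of μ_u in ν, let ρ ∈ 𝓜 satisfy μ_u + ρ = μ_v, and let ν' ∈ 𝓜 satisfy S_u + ν' = ν. Then c(u) = c(v) if and only if ρ ≤_pc ν', where c(w) = sup_{k∈ℝ} (C_{μ_w}(k) − C_ν(k)) for w ∈ (0,1). -/

import Mathlib

open MeasureTheory Set Filter

noncomputable section

/-- `η ∈ 𝓜`: a finite Borel measure on ℝ with finite first moment. -/
def MemM (η : MeasureTheory.Measure ℝ) : Prop :=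
  MeasureTheory.IsFiniteMeasure η ∧ MeasureTheory.Integrable (fun x : ℝ => x) η

/-- Convex-decreasing order `≤_cd`. -/
def LeCD (η χ : MeasureTheory.Measure ℝ) : Prop :=
  ∀ f : ℝ → ℝ, ConvexOn ℝ Set.univ f → Antitone f →
    MeasureTheory.Integrable f η → MeasureTheory.Integrable f χ →
    ∫ x, f x ∂η ≤ ∫ x, f x ∂χ

/-- Positive convex-decreasing order `≤_pcd`. -/
def LePCD (η χ : MeasureTheory.Measure ℝ) : Prop :=
  ∀ f : ℝ → ℝ, (∀ x, 0 ≤ f x) → ConvexOn ℝ Set.univ f → Antitone f →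
    MeasureTheory.Integrable f η → MeasureTheory.Integrable f χ →
    ∫ x, f x ∂η ≤ ∫ x, f x ∂χ

/-- Positive convex order `≤_pc`. -/
def LePC (η χ : MeasureTheory.Measure ℝ) : Prop :=
  ∀ f : ℝ → ℝ, (∀ x, 0 ≤ f x) → ConvexOn ℝ Set.univ f →
    MeasureTheory.Integrable f η → MeasureTheory.Integrable f χ →
    ∫ x, f x ∂η ≤ ∫ x, f x ∂χ

/-- A supermartingale coupling of `η` and `χ`. -/
def IsSupermartingaleCoupling (η χ : MeasureTheory.Measure ℝ)
    (π : MeasureTheory.Measure (ℝ × ℝ)) : Prop :=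
  MeasureTheory.IsProbabilityMeasure π ∧
  π.map Prod.fst = η ∧ π.map Prod.snd = χ ∧
  MeasureTheory.Integrable (fun p : ℝ × ℝ => p.2) π ∧
  ∀ B : Set ℝ, MeasurableSet B →
    ∫ p in B ×ˢ (Set.univ : Set ℝ), (p : ℝ × ℝ).2 ∂π ≤ ∫ x in B, x ∂η

/-- The potential function `P_η(k) = ∫ (k-x)⁺ η(dx)`. -/
def Ppot (η : MeasureTheory.Measure ℝ) (k : ℝ) : ℝ := ∫ x, max (k - x) 0 ∂η

/-- The potential function `C_η(k) = ∫ (x-k)⁺ η(dx)`. -/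
def Cpot (η : MeasureTheory.Measure ℝ) (k : ℝ) : ℝ := ∫ x, max (x - k) 0 ∂η

/-- The left-continuous quantile function `G_η(u) = sup {k | η((-∞,k]) < u}`. -/
def quantile (η : MeasureTheory.Measure ℝ) (u : ℝ) : ℝ :=
  sSup {k : ℝ | (η (Set.Iic k)).toReal < u}

/-- The lift `μ_u = μ|_{(-∞,G(u))} + (u - μ((-∞,G(u)))) δ_{G(u)}`, with `μ_0 = 0`, `μ_1 = μ`. -/
def muU (μ : MeasureTheory.Measure ℝ) (u : ℝ) : MeasureTheory.Measure ℝ :=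
  if u ≤ 0 then 0
  else if 1 ≤ u then μ
  else μ.restrict (Set.Iio (quantile μ u)) +
    (ENNReal.ofReal (u - (μ (Set.Iio (quantile μ u))).toReal)) •
      MeasureTheory.Measure.dirac (quantile μ u)

/-- `S` is a shadow of `μ` in `ν`. -/
def IsShadow (μ ν S : MeasureTheory.Measure ℝ) : Prop :=
  MemM S ∧ LeCD μ S ∧ (∀ A : Set ℝ, MeasurableSet A → S A ≤ ν A) ∧
  ∀ η : MeasureTheory.Measure ℝ, MemM η → LeCD μ η →
    (∀ A : Set ℝ, MeasurableSet A → η A ≤ ν A) → LeCD S η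

/-- `h` is the convex hull of `f`. -/
def IsConvexHullFn (f h : ℝ → ℝ) : Prop :=
  ConvexOn ℝ Set.univ h ∧ (∀ x, h x ≤ f x) ∧
  ∀ g : ℝ → ℝ, ConvexOn ℝ Set.univ g → (∀ x, g x ≤ f x) → ∀ x, g x ≤ h x

/-- The class `𝒟(a,b)`. -/
def MemD (a b : ℝ) (f : ℝ → ℝ) : Prop :=
  (∀ x, 0 ≤ f x) ∧ Monotone f ∧ ConvexOn ℝ Set.univ f ∧
  Filter.Tendsto f Filter.atBot (nhds 0) ∧
  Filter.Tendsto (fun z => f z - (a * z - b)) Filter.atTop (nhds 0)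

/-- The topological support of a measure. -/
def msupport (η : MeasureTheory.Measure ℝ) : Set ℝ :=
  {x : ℝ | ∀ U ∈ nhds x, η U ≠ 0}

lemma ConvexOn.monotone_of_tendsto_atBot_zero {ψ : ℝ → ℝ} (hψ : ConvexOn ℝ univ ψ)
    (h0 : ∀ x, 0 ≤ ψ x) (hlim : Tendsto ψ atBot (nhds 0)) : Monotone ψ := by
  intro x y hxy
  by_contra! hlt
  have hne : x < y := lt_of_le_of_ne hxy (by rintro rfl; exact lt_irrefl _ hlt)
  have hpos : 0 < ψ x := (h0 y).trans_lt hlt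
  obtain ⟨z, hz, hzx⟩ := ((hlim.eventually (gt_mem_nhds hpos)).and (eventually_lt_atBot x)).exists
  have h1 := hψ.slope_mono_adjacent (mem_univ z) (mem_univ y) hzx hne
  have h2 : 0 ≤ (ψ x - ψ z) / (x - z) := div_nonneg (by linarith) (by linarith)
  have h3 : (ψ y - ψ x) / (y - x) < 0 := div_neg_of_neg_of_pos (by linarith) (by linarith)
  linarith

lemma lintegral_ofReal_sub_eq_setLIntegral_Iic (σ : Measure ℝ) [SFinite σ] (k : ℝ) :
    ∫⁻ x, ENNReal.ofReal (k - x) ∂σ = ∫⁻ t in Iic k, σ (Iic t) := by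
  have hm : MeasurableSet {p : ℝ × ℝ | p.1 ≤ p.2 ∧ p.2 ≤ k} :=
    (measurableSet_le measurable_fst measurable_snd).inter
      (measurableSet_le measurable_snd measurable_const)
  calc ∫⁻ x, ENNReal.ofReal (k - x) ∂σ
      = ∫⁻ x, ∫⁻ t, indicator {p : ℝ × ℝ | p.1 ≤ p.2 ∧ p.2 ≤ k} 1 (x, t) ∂volume ∂σ := by
        refine lintegral_congr fun x => ?_
        rw [← Real.volume_Icc, ← lintegral_indicator_one measurableSet_Icc]
        rfl
    _ = ∫⁻ t, ∫⁻ x, indicator {p : ℝ × ℝ | p.1 ≤ p.2 ∧ p.2 ≤ k} 1 (x, t) ∂σ ∂volume :=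
        lintegral_lintegral_swap ((measurable_one.indicator hm).aemeasurable)
    _ = ∫⁻ t in Iic k, σ (Iic t) := by
        rw [← lintegral_indicator measurableSet_Iic]
        refine lintegral_congr fun t => ?_
        by_cases ht : t ≤ k
        · rw [indicator_of_mem (by exact ht), ← lintegral_indicator_one measurableSet_Iic]
          refine lintegral_congr fun x => ?_
          simp [indicator, ht]
        · rw [indicator_of_notMem (by exact ht)]
          simp [indicator, ht]

lemma ConvexOn.exists_measure_lintegral_eq {ψ : ℝ → ℝ} (hψ : ConvexOn ℝ univ ψ)
    (h0 : ∀ x, 0 ≤ ψ x) (hlim : Tendsto ψ atBot (nhds 0)) :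
    ∃ σ : Measure ℝ, SFinite σ ∧
      ∀ k, ∫⁻ x, ENNReal.ofReal (k - x) ∂σ = ENNReal.ofReal (ψ k) := by
  have hmono := hψ.monotone_of_tendsto_atBot_zero h0 hlim
  set r : ℝ → ℝ := fun x => derivWithin ψ (Ioi x) x with hr
  have hder : ∀ x, HasDerivWithinAt ψ (r x) (Ioi x) x := fun x =>
    hψ.hasDerivWithinAt_rightDeriv_of_mem_interior (by simp)
  have hrm : Monotone r := by
    have := hψ.monotoneOn_rightDeriv
    rw [interior_univ] at this
    exact monotoneOn_univ.1 this
  have hr0 : ∀ x, 0 ≤ r x := fun x => hmono.monotoneOn _ |>.derivWithin_nonneg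
  have hrle : ∀ x, r x ≤ ψ (x + 1) := fun x => by
    have := hψ.rightDeriv_le_slope_of_mem_interior (x := x) (y := x + 1) (by simp) (by simp)
      (by linarith)
    rw [slope_def_field] at this
    have h1 := h0 x
    simp only [add_sub_cancel_left, div_one] at this
    exact this.trans (by linarith)
  have hshift : ∀ c : ℝ, Tendsto (fun x => ψ (x + c)) atBot (nhds 0) := fun c =>
    hlim.comp (tendsto_atBot_add_const_right _ c tendsto_id)
  set g := hrm.stieltjesFunction with hg
  have hgle : ∀ x, g x ≤ ψ (x + 2) := fun x => by
    refine (hrm.rightLim_le (by linarith : x < x + 1)).trans ((hrle _).trans_eq ?_)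
    ring_nf
  have hg0 : ∀ x, 0 ≤ g x := fun x => (hr0 x).trans (hrm.le_rightLim le_rfl)
  have hglim : Tendsto g atBot (nhds 0) :=
    tendsto_of_tendsto_of_tendsto_of_le_of_le tendsto_const_nhds (hshift 2) hg0 hgle
  have hae : ∀ᵐ x, g x = r x := by
    have := hrm.countable_not_continuousAt.measure_zero volume
    refine measure_mono_null ?_ this
    intro x hx hc
    exact hx (ContinuousAt.continuousWithinAt hc).rightLim_eq
  refine ⟨g.measure, inferInstance, fun k => ?_⟩
  rw [lintegral_ofReal_sub_eq_setLIntegral_Iic]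
  have h1 : ∫⁻ t in Iic k, g.measure (Iic t) = ∫⁻ t in Iic k, ENNReal.ofReal (r t) := by
    refine lintegral_congr_ae (ae_restrict_of_ae ?_)
    filter_upwards [hae] with t ht
    rw [g.measure_Iic hglim, sub_zero, ht]
  rw [h1]
  have hcont : Continuous ψ :=
    continuousOn_univ.1 (hψ.continuousOn isOpen_univ)
  have hint : ∀ a b, IntervalIntegrable r volume a b := fun a b => hrm.intervalIntegrable
  have hftc : ∀ a, ∫ t in a..k, r t = ψ k - ψ a := fun a =>
    intervalIntegral.integral_eq_sub_of_hasDeriv_right hcont.continuousOn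
      (fun x _ => hder x) (hint _ _)
  have hlim2 : Tendsto (fun a => ∫ t in a..k, r t) atBot (nhds (ψ k)) := by
    simp_rw [hftc]
    simpa using hlim.const_sub (ψ k)
  have hI : IntegrableOn r (Iic k) := by
    refine integrableOn_Iic_of_intervalIntegral_norm_tendsto (ψ k) k (a := id) (l := atBot)
      (fun a => (hint a k).1) tendsto_id ?_
    simpa [Real.norm_of_nonneg (hr0 _)] using hlim2
  rw [← ofReal_integral_eq_lintegral_ofReal hI (Eventually.of_forall hr0)]
  congr 1
  exact tendsto_nhds_unique (intervalIntegral_tendsto_integral_Iic k hI tendsto_id) hlim2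

lemma measure_eq_of_lintegral_ofReal_sub_eq {σ τ : Measure ℝ} [IsFiniteMeasure τ]
    (hfin : ∀ k, ∫⁻ x, ENNReal.ofReal (k - x) ∂τ ≠ ⊤)
    (h : ∀ k, ∫⁻ x, ENNReal.ofReal (k - x) ∂σ = ∫⁻ x, ENNReal.ofReal (k - x) ∂τ) : σ = τ := by
  have lower : ∀ (κ : Measure ℝ) (k ε : ℝ), 0 ≤ ε →
      ENNReal.ofReal ε * κ (Iic k) + ∫⁻ x, ENNReal.ofReal (k - x) ∂κ ≤
        ∫⁻ x, ENNReal.ofReal (k + ε - x) ∂κ := by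
    intro κ k ε hε
    rw [← lintegral_indicator_const measurableSet_Iic, ← lintegral_add_left
      (measurable_const.indicator measurableSet_Iic)]
    refine lintegral_mono fun x => ?_
    by_cases hx : x ≤ k
    · simp only [indicator_of_mem (show x ∈ Iic k from hx)]
      rw [← ENNReal.ofReal_add hε (by linarith)]
      exact ENNReal.ofReal_le_ofReal (by linarith)
    · simp only [indicator_of_notMem (show x ∉ Iic k from hx), zero_add]
      exact ENNReal.ofReal_le_ofReal (by linarith)
  have upper : ∀ (κ : Measure ℝ) (k ε : ℝ), 0 ≤ ε →
      ∫⁻ x, ENNReal.ofReal (k + ε - x) ∂κ ≤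
      ENNReal.ofReal ε * κ (Iic (k + ε)) + ∫⁻ x, ENNReal.ofReal (k - x) ∂κ := by
    intro κ k ε hε
    rw [← lintegral_indicator_const measurableSet_Iic, ← lintegral_add_left
      (measurable_const.indicator measurableSet_Iic)]
    refine lintegral_mono fun x => ?_
    by_cases hx : x ≤ k + ε
    · simp only [indicator_of_mem (show x ∈ Iic (k + ε) from hx)]
      rw [show k + ε - x = ε + (k - x) by ring]
      exact ENNReal.ofReal_add_le
    · rw [ENNReal.ofReal_of_nonpos (by linarith)]
      exact zero_le
  have comp : ∀ (κ κ' : Measure ℝ), (∀ k, ∫⁻ x, ENNReal.ofReal (k - x) ∂κ ≠ ⊤) →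
      (∀ k, ∫⁻ x, ENNReal.ofReal (k - x) ∂κ = ∫⁻ x, ENNReal.ofReal (k - x) ∂κ') →
      ∀ k ε : ℝ, 0 < ε → κ (Iic k) ≤ κ' (Iic (k + ε)) := by
    intro κ κ' hf he k ε hε
    have h1 := (lower κ k ε hε.le).trans ((he _).trans_le (upper κ' k ε hε.le))
    rw [← he k] at h1
    have h2 := (ENNReal.add_le_add_iff_right (hf k)).1 h1
    exact (ENNReal.mul_le_mul_iff_right (by simpa using hε) ENNReal.ofReal_ne_top).1 h2
  have hfinσ : IsFiniteMeasure σ := by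
    refine ⟨lt_of_le_of_lt ?_ (measure_lt_top τ univ)⟩
    have hU : (⋃ n : ℕ, Iic (n : ℝ)) = univ := by
      refine eq_univ_of_forall fun x => ?_
      obtain ⟨n, hn⟩ := exists_nat_ge x
      exact mem_iUnion.2 ⟨n, hn⟩
    have hm : Monotone fun n : ℕ => Iic (n : ℝ) := fun a b hab =>
      Iic_subset_Iic.2 (by exact_mod_cast hab)
    rw [← hU, hm.measure_iUnion, hU]
    refine iSup_le fun n => ?_
    exact (comp σ τ (fun k => by rw [h]; exact hfin k) h _ 1 one_pos).trans
      (measure_mono (subset_univ _))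
  have rc : ∀ (κ : Measure ℝ) [IsFiniteMeasure κ] (c : ENNReal) (k : ℝ),
      (∀ ε : ℝ, 0 < ε → c ≤ κ (Iic (k + ε))) → c ≤ κ (Iic k) := by
    intro κ _ c k hc
    have hI : (⋂ n : ℕ, Iic (k + 1 / ((n : ℝ) + 1))) = Iic k := by
      ext x
      simp only [mem_iInter, mem_Iic]
      refine ⟨fun hx => ?_, fun hx n => hx.trans (by simp; positivity)⟩
      refine le_of_forall_pos_le_add fun ε hε => ?_
      obtain ⟨n, hn⟩ := exists_nat_one_div_lt hε
      linarith [hx n]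
    rw [← hI, Antitone.measure_iInter]
    · exact le_iInf fun n => hc _ (by positivity)
    · intro a b hab
      exact Iic_subset_Iic.2 (by gcongr)
    · exact fun n => measurableSet_Iic.nullMeasurableSet
    · exact ⟨0, measure_ne_top _ _⟩
  refine Measure.ext_of_Iic σ τ fun k => le_antisymm ?_ ?_
  · exact rc τ _ k fun ε hε => comp σ τ (fun k => by rw [h]; exact hfin k) h k ε hε
  · exact rc σ _ k fun ε hε => comp τ σ hfin (fun k => (h k).symm) k ε hε

lemma integrable_max_sub_zero {α : Measure ℝ} (hα : MemM α) (k : ℝ) :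
    Integrable (fun x : ℝ => max (x - k) 0) α := by
  have := hα.1
  exact (hα.2.sub (integrable_const k)).pos_part

lemma integrable_max_const_sub_zero {α : Measure ℝ} (hα : MemM α) (k : ℝ) :
    Integrable (fun x : ℝ => max (k - x) 0) α := by
  have := hα.1
  exact ((integrable_const k).sub hα.2).pos_part

lemma ofReal_Ppot {α : Measure ℝ} (hα : MemM α) (k : ℝ) :
    ENNReal.ofReal (Ppot α k) = ∫⁻ x, ENNReal.ofReal (k - x) ∂α := by
  rw [Ppot, ofReal_integral_eq_lintegral_ofReal (integrable_max_const_sub_zero hα k)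
    (Eventually.of_forall fun x => le_max_right _ _)]
  refine lintegral_congr fun x => ?_
  rw [ENNReal.ofReal_max]
  simp

lemma ConvexOn.comp_min_const {f : ℝ → ℝ} {b : ℝ}
    (hf : ConvexOn ℝ univ f) (hanti : AntitoneOn f (Iic b)) :
    ConvexOn ℝ univ (fun x => f (min x b)) := by
  refine ⟨convex_univ, fun x _ y _ s t hs ht hst => ?_⟩
  have hle : s * min x b + t * min y b ≤ b := by
    calc s * min x b + t * min y b ≤ s * b + t * b := by
          gcongr <;> exact min_le_right _ _
      _ = b := by rw [← add_mul, hst, one_mul]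
  refine le_trans (hanti hle (mem_Iic.2 (min_le_right _ _)) (le_min ?_ hle))
    (hf.2 (mem_univ (min x b)) (mem_univ (min y b)) hs ht hst)
  simp only [smul_eq_mul]
  gcongr <;> exact min_le_left _ _

lemma lintegral_comp_min_le_of_Ppot_le {α β : Measure ℝ} (hα : MemM α) (hβ : MemM β)
    (hP : ∀ k, Ppot α k ≤ Ppot β k) {f : ℝ → ℝ} {b : ℝ} (hf : ConvexOn ℝ univ f)
    (hanti : AntitoneOn f (Iic b)) :
    ∫⁻ x, ENNReal.ofReal (f (min x b) - f b) ∂α ≤ ∫⁻ x, ENNReal.ofReal (f (min x b) - f b) ∂β := by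
  have := hα.1
  have := hβ.1
  have hc : ConvexOn ℝ univ (fun y => f (min (-y) b) - f b) := by
    have h1 := (hf.comp_min_const hanti).comp_linearMap (-LinearMap.id)
    exact (h1.add_const (-f b)).congr fun x _ => by simp [sub_eq_add_neg]
  obtain ⟨σ, hσ, hσe⟩ := hc.exists_measure_lintegral_eq
    (fun x => sub_nonneg.2 (hanti (mem_Iic.2 (min_le_right _ _)) self_mem_Iic (min_le_right _ _)))
    (tendsto_const_nhds.congr' (by
      filter_upwards [eventually_le_atBot (-b)] with y hy
      rw [min_eq_right (by linarith), sub_self]))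
  have key : ∀ κ : Measure ℝ, MemM κ → ∫⁻ x, ENNReal.ofReal (f (min x b) - f b) ∂κ =
      ∫⁻ y, ENNReal.ofReal (Ppot κ (-y)) ∂σ := by
    intro κ hκ
    have := hκ.1
    calc ∫⁻ x, ENNReal.ofReal (f (min x b) - f b) ∂κ
        = ∫⁻ x, ∫⁻ y, ENNReal.ofReal (-x - y) ∂σ ∂κ := by
          refine lintegral_congr fun x => ?_
          rw [hσe, neg_neg]
      _ = ∫⁻ y, ∫⁻ x, ENNReal.ofReal (-x - y) ∂κ ∂σ :=
          lintegral_lintegral_swap (by fun_prop)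
      _ = _ := by
          refine lintegral_congr fun y => ?_
          rw [ofReal_Ppot hκ]
          refine lintegral_congr fun x => ?_
          ring_nf
  rw [key α hα, key β hβ]
  exact lintegral_mono fun y => ENNReal.ofReal_le_ofReal (hP _)

lemma integrable_comp_min {α : Measure ℝ} [IsFiniteMeasure α] {f : ℝ → ℝ}
    (hc : ConvexOn ℝ univ f) (hf : Integrable f α) (b : ℝ) : Integrable (fun x => f (min x b)) α := by
  refine (hf.norm.add (integrable_const |f b|)).mono'
    ((continuousOn_univ.1 (hc.continuousOn isOpen_univ)).comp
      (continuous_id.min continuous_const)).aestronglyMeasurable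
    (Eventually.of_forall fun x => ?_)
  rcases le_total x b with h | h
  · simp [min_eq_left h]
  · simp [min_eq_right h]

lemma integral_comp_min_sub_le_of_Ppot_le {α β : Measure ℝ} (hα : MemM α) (hβ : MemM β)
    (hP : ∀ k, Ppot α k ≤ Ppot β k) {f : ℝ → ℝ} {b : ℝ} (hf : ConvexOn ℝ univ f)
    (hanti : AntitoneOn f (Iic b)) (hfα : Integrable f α) (hfβ : Integrable f β) :
    ∫ x, (f (min x b) - f b) ∂α ≤ ∫ x, (f (min x b) - f b) ∂β := by
  have := hα.1
  have := hβ.1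
  have hnn : ∀ x, 0 ≤ f (min x b) - f b := fun x => sub_nonneg.2 (hanti (mem_Iic.2 (min_le_right _ _)) self_mem_Iic (min_le_right _ _))
  have hI : ∀ κ : Measure ℝ, IsFiniteMeasure κ → Integrable f κ →
      Integrable (fun x => f (min x b) - f b) κ := fun κ _ h =>
    (integrable_comp_min hf h b).sub (integrable_const _)
  have h := lintegral_comp_min_le_of_Ppot_le hα hβ hP hf hanti
  rw [← ofReal_integral_eq_lintegral_ofReal (hI α ‹_› hfα) (Eventually.of_forall hnn),
    ← ofReal_integral_eq_lintegral_ofReal (hI β ‹_› hfβ) (Eventually.of_forall hnn)] at h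
  exact (ENNReal.ofReal_le_ofReal_iff (integral_nonneg hnn)).1 h

lemma leCD_of_Ppot_le {α β : Measure ℝ} (hα : MemM α) (hβ : MemM β)
    (hmass : α.real univ = β.real univ) (hP : ∀ k, Ppot α k ≤ Ppot β k) : LeCD α β := by
  intro f hf hanti hfα hfβ
  have := hα.1
  have := hβ.1
  have hstep : ∀ b, ∫ x, f (min x b) ∂α ≤ ∫ x, f (min x b) ∂β := by
    intro b
    have h := integral_comp_min_sub_le_of_Ppot_le hα hβ hP hf (hanti.antitoneOn _) hfα hfβ (b := b)
    rw [integral_sub (integrable_comp_min hf hfα b) (integrable_const _),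
      integral_sub (integrable_comp_min hf hfβ b) (integrable_const _),
      integral_const, integral_const, hmass] at h
    linarith
  have hlim : ∀ κ : Measure ℝ, IsFiniteMeasure κ → Integrable f κ →
      Tendsto (fun b => ∫ x, f (min x b) ∂κ) atTop (nhds (∫ x, f x ∂κ)) := by
    intro κ _ hfκ
    refine tendsto_integral_filter_of_dominated_convergence (fun x => |f x| + |f 0|) ?_ ?_
      (hfκ.abs.add (integrable_const _)) ?_
    · exact Eventually.of_forall fun b => (integrable_comp_min hf hfκ b).1
    · filter_upwards [eventually_ge_atTop 0] with b hb
      refine Eventually.of_forall fun x => ?_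
      rcases le_total x b with h | h
      · simp [min_eq_left h]
      · have h1 := hanti h
        have h2 := hanti hb
        rw [min_eq_right h, Real.norm_eq_abs, abs_le]
        constructor
        · linarith [neg_abs_le (f x), abs_nonneg (f 0)]
        · linarith [le_abs_self (f 0), abs_nonneg (f x)]
    · refine Eventually.of_forall fun x => tendsto_const_nhds.congr' ?_
      filter_upwards [eventually_ge_atTop x] with b hb
      rw [min_eq_left hb]
  exact le_of_tendsto_of_tendsto' (hlim α ‹_› hfα) (hlim β ‹_› hfβ) hstep

lemma convexOn_sub_of_forall_affine_minorant_le {P f h : ℝ → ℝ}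
    (hP : ConvexOn ℝ univ P) (hPf : ConvexOn ℝ univ (fun x => P x - f x))
    (hh : ConvexOn ℝ univ h) (hle : ∀ x, h x ≤ f x)
    (hmax : ∀ a b : ℝ, (∀ x, a * x + b ≤ f x) → ∀ x, a * x + b ≤ h x) :
    ConvexOn ℝ univ (fun x => P x - h x) := by
  have hPc : Continuous P := continuousOn_univ.1 (hP.continuousOn isOpen_univ)
  have hfc : Continuous f := by
    have := hPc.sub (continuousOn_univ.1 (hPf.continuousOn isOpen_univ))
    exact this.congr fun x => by simp
  have hhc : Continuous h := continuousOn_univ.1 (hh.continuousOn isOpen_univ)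
  refine LinearOrder.convexOn_of_lt convex_univ fun x _ y _ hxy s t hs ht hst => ?_
  by_contra! hlt
  simp only [smul_eq_mul] at hlt
  set z := s * x + t * y with hz
  set c := ((P y - h y) - (P x - h x)) / (y - x) with hc
  set G : ℝ → ℝ := fun p => P p - h p - ((P x - h x) + c * (p - x)) with hG
  have hyx : y - x ≠ 0 := by linarith
  have hGx : G x = 0 := by simp [hG]
  have hGy : G y = 0 := by simp only [hG, hc]; field_simp; ring
  have hGc : Continuous G := by fun_prop
  have hzmem : z ∈ Icc x y := by
    have hs' : s = 1 - t := by linarith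
    rw [hz, hs']
    constructor <;> nlinarith [mul_pos ht (sub_pos.2 hxy), mul_pos hs (sub_pos.2 hxy)]
  have hGz : 0 < G z := by
    have hs' : s = 1 - t := by linarith
    have h1 : c * (z - x) = t * ((P y - h y) - (P x - h x)) := by
      rw [hc, hz, hs']; field_simp; ring
    simp only [hG]
    rw [h1]
    rw [hs'] at hlt
    linarith
  obtain ⟨m₀, hm₀, hm₀max⟩ := isCompact_Icc.exists_isMaxOn ⟨z, hzmem⟩ hGc.continuousOn
  set M := G m₀
  have hMpos : 0 < M := hGz.trans_le (hm₀max hzmem)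
  obtain ⟨m, ⟨hmI, hmM⟩, hmleast⟩ :=
    ((isCompact_Icc (a := x) (b := y)).inter_right (isClosed_singleton.preimage hGc :
      IsClosed (G ⁻¹' {M}))).exists_isLeast ⟨m₀, hm₀, rfl⟩
  have hmM' : G m = M := hmM
  have hxm : x < m := lt_of_le_of_ne hmI.1 (by rintro rfl; linarith)
  have hmy : m < y := lt_of_le_of_ne hmI.2 (by rintro rfl; linarith)
  rcases (hle m).eq_or_lt with heq | hlt'
  · set a := (y - m) / (y - x) with ha
    set b := (m - x) / (y - x) with hb
    have hyx' : 0 < y - x := by linarith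
    have ha0 : 0 < a := div_pos (by linarith) hyx'
    have hb0 : 0 < b := div_pos (by linarith) hyx'
    have hab : a + b = 1 := by rw [ha, hb]; field_simp; ring
    have hm : a * x + b * y = m := by rw [ha, hb]; field_simp; ring
    have hconv := hPf.2 (mem_univ x) (mem_univ y) ha0.le hb0.le hab
    simp only [smul_eq_mul, hm] at hconv
    have e1 : P x - f x ≤ P x - h x := by linarith [hle x]
    have e2 : P y - f y ≤ P y - h y := by linarith [hle y]
    have e3 : a * (P x - f x) + b * (P y - f y) ≤ a * (P x - h x) + b * (P y - h y) := by gcongr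
    have e4 : c * (m - x) = b * ((P y - h y) - (P x - h x)) := by
      rw [hc, hb]; field_simp
    have ha' : a = 1 - b := by linarith
    have e5 : G m = P m - f m - ((P x - h x) + b * ((P y - h y) - (P x - h x))) := by
      simp only [hG]; rw [e4, heq]
    rw [ha'] at e3 hconv
    linarith
  · set d := (h m + f m) / 2 with hd
    have ev : ∀ᶠ p in nhds m, h p < d ∧ d < f p ∧ p ∈ Ioo x y :=
      (hhc.continuousAt.eventually (gt_mem_nhds (by linarith))).and
        ((hfc.continuousAt.eventually (lt_mem_nhds (by linarith))).and (Ioo_mem_nhds hxm hmy))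
    obtain ⟨δ₀, hδ₀, hball⟩ := Metric.eventually_nhds_iff.1 ev
    set δ := δ₀ / 2 with hδ
    have hδpos : 0 < δ := by positivity
    have hnear : ∀ p, |p - m| ≤ δ → h p < d ∧ d < f p ∧ p ∈ Ioo x y := fun p hp =>
      hball (by rw [Real.dist_eq]; linarith)
    obtain ⟨l1, l2, l3⟩ := hnear (m - δ) (by rw [abs_le]; constructor <;> linarith)
    obtain ⟨r1, r2, r3⟩ := hnear (m + δ) (by rw [abs_le]; constructor <;> linarith)
    set q := (h (m + δ) - h (m - δ)) / (2 * δ) with hq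
    set w := h (m - δ) - q * (m - δ) with hw
    have hqδ : q * (2 * δ) = h (m + δ) - h (m - δ) := by rw [hq]; field_simp
    have hlin : ∀ p, q * p + w ≤ f p := by
      intro p
      rcases lt_or_ge p (m - δ) with hp | hp
      · refine le_trans ?_ (hle p)
        have := hh.slope_mono_adjacent (mem_univ p) (mem_univ (m + δ)) hp (by linarith)
        rw [show m + δ - (m - δ) = 2 * δ by ring, ← hq, div_le_iff₀ (by linarith)] at this
        rw [hw]; linarith
      rcases lt_or_ge (m + δ) p with hp2 | hp2
      · refine le_trans ?_ (hle p)
        have := hh.slope_mono_adjacent (mem_univ (m - δ)) (mem_univ p)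
          (by linarith : m - δ < m + δ) hp2
        rw [show m + δ - (m - δ) = 2 * δ by ring, ← hq, le_div_iff₀ (by linarith)] at this
        rw [hw]; linarith
      · refine le_trans ?_ (hnear p (by rw [abs_le]; constructor <;> linarith)).2.1.le
        rcases le_total 0 q with hq0 | hq0
        · have : q * p ≤ q * (m + δ) := by gcongr
          rw [hw]; linarith
        · have : q * p ≤ q * (m - δ) := mul_le_mul_of_nonpos_left hp hq0
          rw [hw]; linarith
    have hmid : (h (m - δ) + h (m + δ)) / 2 ≤ h m := by
      refine le_trans (le_of_eq ?_) (hmax q w hlin m)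
      rw [hw]; linarith
    have hPmid : P m ≤ (P (m - δ) + P (m + δ)) / 2 := by
      have := hP.2 (mem_univ (m - δ)) (mem_univ (m + δ)) (by norm_num : (0:ℝ) ≤ 1 / 2)
        (by norm_num : (0:ℝ) ≤ 1 / 2) (by norm_num)
      simp only [smul_eq_mul] at this
      rw [show 1 / 2 * (m - δ) + 1 / 2 * (m + δ) = m by ring] at this
      linarith
    have hGmid : G m ≤ (G (m - δ) + G (m + δ)) / 2 := by
      simp only [hG]; linarith
    have hl : G (m - δ) ≤ M := hm₀max (Ioo_subset_Icc_self l3)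
    have hr : G (m + δ) ≤ M := hm₀max (Ioo_subset_Icc_self r3)
    have hlM : G (m - δ) = M := by linarith
    have := hmleast ⟨Ioo_subset_Icc_self l3, hlM⟩
    linarith

lemma exists_convexOn_affine_hull {f : ℝ → ℝ} (hf0 : ∀ x, 0 ≤ f x) :
    ∃ h : ℝ → ℝ, ConvexOn ℝ univ h ∧ (∀ x, h x ≤ f x) ∧
      ∀ a b : ℝ, (∀ x, a * x + b ≤ f x) → ∀ x, a * x + b ≤ h x := by
  set L : Set (ℝ × ℝ) := {p | ∀ x, p.1 * x + p.2 ≤ f x}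
  have : Nonempty L := ⟨⟨(0, 0), fun x => by simpa using hf0 x⟩⟩
  have hbdd : ∀ x, BddAbove (range fun p : L => p.1.1 * x + p.1.2) := fun x =>
    ⟨f x, by rintro _ ⟨p, rfl⟩; exact p.2 x⟩
  refine ⟨fun x => ⨆ p : L, (p.1.1 * x + p.1.2), ⟨convex_univ, ?_⟩, fun x => ciSup_le fun p => p.2 x,
    fun a b hab x => le_ciSup (hbdd x) ⟨(a, b), hab⟩⟩
  intro x _ y _ s t hs ht hst
  refine ciSup_le fun p => ?_
  have h1 := le_ciSup (hbdd x) p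
  have h2 := le_ciSup (hbdd y) p
  simp only [smul_eq_mul]
  calc p.1.1 * (s * x + t * y) + p.1.2
      = s * (p.1.1 * x + p.1.2) + t * (p.1.1 * y + p.1.2) := by
        linear_combination (-p.1.2) * hst
    _ ≤ _ := by gcongr

lemma Cpot_eq {α : Measure ℝ} (hα : MemM α) (k : ℝ) :
    Cpot α k = Ppot α k + ∫ x, x ∂α - α.real univ * k := by
  have := hα.1
  have h : ∫ x, (x - k) ∂α = ∫ x, x ∂α - α.real univ * k := by
    rw [integral_sub hα.2 (integrable_const k), integral_const, smul_eq_mul]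
  rw [Cpot, Ppot, add_sub_assoc, ← h, ← integral_add (integrable_max_const_sub_zero hα k)
    (by exact hα.2.sub (integrable_const k))]
  refine integral_congr_ae (Eventually.of_forall fun x => ?_)
  dsimp only
  rcases le_total x k with h | h
  · rw [max_eq_right (by linarith), max_eq_left (by linarith)]; ring
  · rw [max_eq_left (by linarith), max_eq_right (by linarith)]; ring

lemma Cpot_nonneg (α : Measure ℝ) (k : ℝ) : 0 ≤ Cpot α k :=
  integral_nonneg fun _ => le_max_right _ _

lemma Ppot_nonneg (α : Measure ℝ) (k : ℝ) : 0 ≤ Ppot α k :=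
  integral_nonneg fun _ => le_max_right _ _

lemma Cpot_add {α β : Measure ℝ} (hα : MemM α) (hβ : MemM β) (k : ℝ) :
    Cpot (α + β) k = Cpot α k + Cpot β k :=
  integral_add_measure (integrable_max_sub_zero hα k) (integrable_max_sub_zero hβ k)

lemma Ppot_add {α β : Measure ℝ} (hα : MemM α) (hβ : MemM β) (k : ℝ) :
    Ppot (α + β) k = Ppot α k + Ppot β k :=
  integral_add_measure (integrable_max_const_sub_zero hα k) (integrable_max_const_sub_zero hβ k)

lemma MemM.mono {α β : Measure ℝ} (hβ : MemM β) (h : α ≤ β) : MemM α := by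
  have := hβ.1
  exact ⟨isFiniteMeasure_of_le β h, hβ.2.mono_measure h⟩

lemma Ppot_mono {α β : Measure ℝ} (hβ : MemM β) (h : α ≤ β) (k : ℝ) : Ppot α k ≤ Ppot β k :=
  integral_mono_measure h (Eventually.of_forall fun _ => le_max_right _ _)
    (integrable_max_const_sub_zero hβ k)

lemma Cpot_mono {α β : Measure ℝ} (hβ : MemM β) (h : α ≤ β) (k : ℝ) : Cpot α k ≤ Cpot β k :=
  integral_mono_measure h (Eventually.of_forall fun _ => le_max_right _ _)
    (integrable_max_sub_zero hβ k)

lemma convexOn_max_const_sub_zero (k : ℝ) : ConvexOn ℝ univ fun x : ℝ => max (k - x) 0 := by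
  refine ⟨convex_univ, fun x _ y _ s t hs ht hst => ?_⟩
  simp only [smul_eq_mul]
  refine max_le ?_ (by positivity)
  calc k - (s * x + t * y) = s * (k - x) + t * (k - y) := by linear_combination (-k) * hst
    _ ≤ _ := by gcongr <;> exact le_max_left _ _

lemma convexOn_max_sub_zero (k : ℝ) : ConvexOn ℝ univ fun x : ℝ => max (x - k) 0 := by
  refine ⟨convex_univ, fun x _ y _ s t hs ht hst => ?_⟩
  simp only [smul_eq_mul]
  refine max_le ?_ (by positivity)
  calc s * x + t * y - k = s * (x - k) + t * (y - k) := by linear_combination k * hst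
    _ ≤ _ := by gcongr <;> exact le_max_left _ _

lemma convexOn_Ppot {α : Measure ℝ} (hα : MemM α) : ConvexOn ℝ univ (Ppot α) := by
  refine ⟨convex_univ, fun x _ y _ s t hs ht hst => ?_⟩
  simp only [smul_eq_mul, Ppot]
  rw [← integral_const_mul, ← integral_const_mul, ← integral_add
    ((integrable_max_const_sub_zero hα x).const_mul s)
    ((integrable_max_const_sub_zero hα y).const_mul t)]
  refine integral_mono (integrable_max_const_sub_zero hα _)
    (((integrable_max_const_sub_zero hα x).const_mul s).add
    ((integrable_max_const_sub_zero hα y).const_mul t)) fun z => ?_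
  exact (convexOn_max_sub_zero z).2 (mem_univ x) (mem_univ y) hs ht hst

lemma convexOn_Cpot {α : Measure ℝ} (hα : MemM α) : ConvexOn ℝ univ (Cpot α) := by
  refine ⟨convex_univ, fun x _ y _ s t hs ht hst => ?_⟩
  simp only [smul_eq_mul, Cpot]
  rw [← integral_const_mul, ← integral_const_mul, ← integral_add
    ((integrable_max_sub_zero hα x).const_mul s) ((integrable_max_sub_zero hα y).const_mul t)]
  refine integral_mono (integrable_max_sub_zero hα _)
    (((integrable_max_sub_zero hα x).const_mul s).add
    ((integrable_max_sub_zero hα y).const_mul t)) fun z => ?_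
  exact (convexOn_max_const_sub_zero z).2 (mem_univ x) (mem_univ y) hs ht hst

lemma tendsto_Ppot_atBot {α : Measure ℝ} (hα : MemM α) : Tendsto (Ppot α) atBot (nhds 0) := by
  have := hα.1
  have h := tendsto_integral_filter_of_dominated_convergence (μ := α) (l := atBot)
    (F := fun k x : ℝ => max (k - x) 0) (f := fun _ => 0) (fun x => |x|)
    (Eventually.of_forall fun k => (integrable_max_const_sub_zero hα k).1) ?_ hα.2.abs ?_
  · rwa [integral_zero] at h
  · filter_upwards [eventually_le_atBot 0] with k hk
    refine Eventually.of_forall fun x => ?_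
    rw [Real.norm_of_nonneg (le_max_right _ _)]
    exact max_le (by linarith [neg_abs_le x]) (abs_nonneg x)
  · refine Eventually.of_forall fun x => tendsto_const_nhds.congr' ?_
    filter_upwards [eventually_le_atBot x] with k hk
    rw [max_eq_right (by linarith)]

lemma tendsto_Cpot_atTop {α : Measure ℝ} (hα : MemM α) : Tendsto (Cpot α) atTop (nhds 0) := by
  have := hα.1
  have h := tendsto_integral_filter_of_dominated_convergence (μ := α) (l := atTop)
    (F := fun k x : ℝ => max (x - k) 0) (f := fun _ => 0) (fun x => |x|)
    (Eventually.of_forall fun k => (integrable_max_sub_zero hα k).1) ?_ hα.2.abs ?_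
  · rwa [integral_zero] at h
  · filter_upwards [eventually_ge_atTop 0] with k hk
    refine Eventually.of_forall fun x => ?_
    rw [Real.norm_of_nonneg (le_max_right _ _)]
    exact max_le (by linarith [le_abs_self x]) (abs_nonneg x)
  · refine Eventually.of_forall fun x => tendsto_const_nhds.congr' ?_
    filter_upwards [eventually_ge_atTop x] with k hk
    rw [max_eq_right (by linarith)]

lemma LeCD.Ppot_le {α β : Measure ℝ} (h : LeCD α β) (hα : MemM α) (hβ : MemM β) (k : ℝ) :
    Ppot α k ≤ Ppot β k :=
  h _ (convexOn_max_const_sub_zero k) (fun x y hxy => by gcongr)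
    (integrable_max_const_sub_zero hα k) (integrable_max_const_sub_zero hβ k)

lemma LeCD.mass_eq {α β : Measure ℝ} (h : LeCD α β) (hα : MemM α) (hβ : MemM β) :
    α.real univ = β.real univ := by
  have := hα.1
  have := hβ.1
  have h1 := h (fun _ => 1) (convexOn_const _ convex_univ) antitone_const
    (integrable_const _) (integrable_const _)
  have h2 := h (fun _ => -1) (convexOn_const _ convex_univ) antitone_const
    (integrable_const _) (integrable_const _)
  simp only [integral_const, smul_eq_mul] at h1 h2
  linarith

lemma le_of_forall_mul_add_le {a b c d : ℝ} (h : ∀ k, 0 ≤ k → a * k + c ≤ b * k + d) : a ≤ b := by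
  by_contra! hlt
  have hab : 0 < a - b := by linarith
  have h1 := h ((|d - c| + 1) / (a - b)) (by positivity)
  have h2 : (a - b) * ((|d - c| + 1) / (a - b)) = |d - c| + 1 := by field_simp
  linarith [le_abs_self (d - c)]

lemma MemM.map_neg {α : Measure ℝ} (hα : MemM α) : MemM (α.map Neg.neg) := by
  have := hα.1
  refine ⟨inferInstance, ?_⟩
  exact (integrable_map_measure (by fun_prop) measurable_neg.aemeasurable).2 hα.2.neg

lemma Ppot_map_neg (α : Measure ℝ) (k : ℝ) : Ppot (α.map Neg.neg) k = Cpot α (-k) := by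
  rw [Ppot, integral_map measurable_neg.aemeasurable
    (by fun_prop), Cpot]
  refine integral_congr_ae (Eventually.of_forall fun x => ?_)
  dsimp only
  ring_nf

lemma ConvexOn.antitoneOn_Iic_of_forall_le {f : ℝ → ℝ} {b : ℝ} (hf : ConvexOn ℝ univ f)
    (hmin : ∀ x, f b ≤ f x) : AntitoneOn f (Iic b) := fun x _ _ hy hxy =>
  (hf.le_max_of_mem_Icc (mem_univ x) (mem_univ b) ⟨hxy, hy⟩).trans (max_le le_rfl (hmin x))

lemma integral_le_of_forall_le {α β : Measure ℝ} (hα : MemM α) (hβ : MemM β)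
    (hmass : α.real univ ≤ β.real univ) (hP : ∀ k, Ppot α k ≤ Ppot β k)
    (hC : ∀ k, Cpot α k ≤ Cpot β k) {f : ℝ → ℝ} {b : ℝ} (hf : ConvexOn ℝ univ f)
    (hfα : Integrable f α) (hfβ : Integrable f β) (hb : 0 ≤ f b) (hmin : ∀ x, f b ≤ f x) :
    ∫ x, f x ∂α ≤ ∫ x, f x ∂β := by
  have := hα.1
  have := hβ.1
  have hneg : ConvexOn ℝ univ (fun x => f (-x)) := hf.comp_linearMap (-LinearMap.id)
  have hnegc : Continuous (fun x => f (-x)) :=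
    continuousOn_univ.1 (hneg.continuousOn isOpen_univ)
  have hmap : ∀ κ : Measure ℝ, Integrable f κ → Integrable (fun x => f (-x)) (κ.map Neg.neg) := by
    intro κ h
    refine (integrable_map_measure hnegc.aestronglyMeasurable measurable_neg.aemeasurable).2 ?_
    simpa [Function.comp_def] using h
  have key : ∀ κ : Measure ℝ, IsFiniteMeasure κ → Integrable f κ →
      ∫ x, f x ∂κ = ∫ x, (f (min x b) - f b) ∂κ +
        ∫ x, (f (-(min x (-b))) - f (-(-b))) ∂(κ.map Neg.neg) + f b * κ.real univ := by
    intro κ _ h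
    have hI := integrable_comp_min hneg (hmap κ h) (-b)
    have hI2 : Integrable (fun x => f (-(min (-x) (-b)))) κ :=
      (integrable_map_measure hI.1 measurable_neg.aemeasurable).1 hI
    rw [integral_map measurable_neg.aemeasurable (by exact hI.1.sub aestronglyMeasurable_const),
      integral_sub (integrable_comp_min hf h b) (integrable_const _),
      integral_sub hI2 (integrable_const _)]
    simp only [integral_const, smul_eq_mul, neg_neg]
    have : ∫ x, f x ∂κ = ∫ x, (f (min x b) + f (-(min (-x) (-b))) - f b) ∂κ := by
      refine integral_congr_ae (Eventually.of_forall fun x => ?_)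
      dsimp only
      rcases le_total x b with hx | hx
      · rw [min_eq_left hx, min_eq_right (by linarith), neg_neg]; ring
      · rw [min_eq_right hx, min_eq_left (by linarith), neg_neg]; ring
    rw [this, integral_sub (by exact (integrable_comp_min hf h b).add hI2) (integrable_const _),
      integral_add (integrable_comp_min hf h b) hI2]
    simp only [integral_const, smul_eq_mul]
    ring
  have h1 := integral_comp_min_sub_le_of_Ppot_le hα hβ hP hf
    (hf.antitoneOn_Iic_of_forall_le hmin) hfα hfβ
  have h2 := integral_comp_min_sub_le_of_Ppot_le hα.map_neg hβ.map_neg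
    (fun k => by rw [Ppot_map_neg, Ppot_map_neg]; exact hC _) hneg
    (hneg.antitoneOn_Iic_of_forall_le (b := -b) fun x => by rw [neg_neg]; exact hmin _)
    (hmap α hfα) (hmap β hfβ)
  rw [key α ‹_› hfα, key β ‹_› hfβ]
  have h3 : f b * α.real univ ≤ f b * β.real univ := by gcongr
  linarith

lemma lePC_of_Ppot_le_of_Cpot_le {α β : Measure ℝ} (hα : MemM α) (hβ : MemM β)
    (hmass : α.real univ ≤ β.real univ) (hP : ∀ k, Ppot α k ≤ Ppot β k)
    (hC : ∀ k, Cpot α k ≤ Cpot β k) : LePC α β := by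
  intro f hf0 hf hfα hfβ
  have hfc : Continuous f := continuousOn_univ.1 (hf.continuousOn isOpen_univ)
  have hstep : ∀ ε : ℝ, 0 < ε →
      ∫ x, f x ∂α + ε * ∫ x, |x| ∂α ≤ ∫ x, f x ∂β + ε * ∫ x, |x| ∂β := by
    intro ε hε
    have hconv : ConvexOn ℝ univ (fun x => f x + ε * |x|) :=
      hf.add ((convexOn_norm (E := ℝ) convex_univ).smul hε.le)
    have hcoer : Tendsto (fun x => f x + ε * |x|) (cocompact ℝ) atTop :=
      tendsto_atTop_mono (fun x => le_add_of_nonneg_left (hf0 x))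
        ((tendsto_norm_cocompact_atTop (E := ℝ)).const_mul_atTop hε)
    obtain ⟨b, hb⟩ := Continuous.exists_forall_le (by fun_prop) hcoer
    have hI : ∀ κ : Measure ℝ, MemM κ → Integrable (fun x : ℝ => ε * |x|) κ := fun κ hκ =>
      hκ.2.abs.const_mul ε
    have := integral_le_of_forall_le hα hβ hmass hP hC hconv (hfα.add (hI α hα))
      (hfβ.add (hI β hβ)) (b := b) (by have := hf0 b; positivity) hb
    rwa [integral_add hfα (hI α hα), integral_add hfβ (hI β hβ), integral_const_mul,
      integral_const_mul] at this
  have hlim : ∀ c d : ℝ, Tendsto (fun ε : ℝ => c + ε * d) (nhdsWithin 0 (Ioi 0)) (nhds c) := by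
    intro c d
    have : Continuous fun ε : ℝ => c + ε * d := by fun_prop
    simpa using (this.tendsto 0).mono_left nhdsWithin_le_nhds
  exact le_of_tendsto_of_tendsto (hlim _ _) (hlim _ _)
    (eventually_nhdsWithin_of_forall fun ε hε => hstep ε hε)

lemma muU_le (μ : Measure ℝ) [IsProbabilityMeasure μ] {u : ℝ} (hu : u ∈ Ioo (0 : ℝ) 1) :
    muU μ u ≤ μ := by
  set q := quantile μ u with hq
  have hbdd : BddAbove {k : ℝ | (μ (Iic k)).toReal < u} := by
    have hlim := ProbabilityTheory.tendsto_cdf_atTop μ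
    obtain ⟨K, hK⟩ := (hlim.eventually (lt_mem_nhds hu.2)).exists
    refine ⟨K, fun k hk => ?_⟩
    by_contra! hlt
    have h1 := ProbabilityTheory.monotone_cdf μ hlt.le
    rw [ProbabilityTheory.cdf_eq_real μ k] at h1
    exact absurd (h1.trans_lt hk) hK.not_gt
  have hge : u ≤ (μ (Iic q)).toReal := by
    have hr := (ProbabilityTheory.cdf μ).right_continuous q
    have hr' : Tendsto (ProbabilityTheory.cdf μ) (nhdsWithin q (Ioi q))
        (nhds (ProbabilityTheory.cdf μ q)) := hr.mono Ioi_subset_Ici_self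
    have : u ≤ ProbabilityTheory.cdf μ q := by
      refine ge_of_tendsto hr' (eventually_nhdsWithin_of_forall fun k hk => ?_)
      by_contra! hlt
      rw [ProbabilityTheory.cdf_eq_real μ k] at hlt
      exact absurd (le_csSup hbdd hlt) (not_le.2 hk)
    rwa [ProbabilityTheory.cdf_eq_real μ q] at this
  have hsing : ENNReal.ofReal (u - (μ (Iio q)).toReal) ≤ μ {q} := by
    refine ENNReal.ofReal_le_of_le_toReal ?_
    have hd : μ (Iic q) = μ (Iio q) + μ {q} := by
      rw [← Iio_union_right, measure_union (by simp) (measurableSet_singleton q)]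
    rw [hd, ENNReal.toReal_add (measure_ne_top _ _) (measure_ne_top _ _)] at hge
    linarith
  rw [muU, if_neg (not_le.2 hu.1), if_neg (not_le.2 hu.2), ← hq]
  calc μ.restrict (Iio q) + ENNReal.ofReal (u - (μ (Iio q)).toReal) • Measure.dirac q
      ≤ μ.restrict (Iio q) + μ {q} • Measure.dirac q := by gcongr
    _ = μ.restrict (Iic q) := by
      rw [← Measure.restrict_singleton, ← Measure.restrict_union (by simp)
        (measurableSet_singleton q), Iio_union_right]
    _ ≤ μ := Measure.restrict_le_self

/-- Every affine minorant of `P_ν - P_α` is a minorant of the potential of `ν - S`, for `S` the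
shadow of `α` in `ν`. -/
lemma IsShadow.affine_le_Ppot {α S ν' : Measure ℝ} (hα : MemM α) (hν' : MemM ν')
    (hS : IsShadow α (S + ν') S) {a b : ℝ}
    (hab : ∀ x, a * x + b ≤ Ppot (S + ν') x - Ppot α x) (x : ℝ) : a * x + b ≤ Ppot ν' x := by
  obtain ⟨hSM, hαS, -, hSmin⟩ := hS
  set ν := S + ν' with hνdef
  have hν : MemM ν := by
    have := hSM.1
    have := hν'.1
    exact ⟨by rw [hνdef]; infer_instance, hSM.2.add_measure hν'.2⟩
  have := hν.1
  have := hν'.1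
  have := hSM.1
  have := hα.1
  have hPadd : ∀ k, Ppot ν k = Ppot S k + Ppot ν' k := Ppot_add hSM hν'
  have hPS := hαS.Ppot_le hα hSM
  have hfν' : ∀ k, Ppot ν' k ≤ Ppot ν k - Ppot α k := fun k => by linarith [hPadd k, hPS k]
  obtain ⟨h, hconv, hle, hmax⟩ := exists_convexOn_affine_hull (f := fun k => Ppot ν k - Ppot α k)
    fun k => (Ppot_nonneg ν' k).trans (hfν' k)
  have hh0 : ∀ k, 0 ≤ h k := fun k => by
    simpa using hmax 0 0 (fun y => by simpa using (Ppot_nonneg ν' y).trans (hfν' y)) k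
  have hhν : ∀ k, h k ≤ Ppot ν k := fun k => (hle k).trans (by linarith [Ppot_nonneg α k])
  have hQα : ∀ k, Ppot α k ≤ Ppot ν k - h k := fun k => by linarith [hle k]
  have hQ0 : ∀ k, 0 ≤ Ppot ν k - h k := fun k => (Ppot_nonneg α k).trans (hQα k)
  have hQconv : ConvexOn ℝ univ (fun k => Ppot ν k - h k) :=
    convexOn_sub_of_forall_affine_minorant_le (convexOn_Ppot hν)
      ((convexOn_Ppot hα).congr fun k _ => by ring) hconv hle hmax
  have hνlim := tendsto_Ppot_atBot hν
  obtain ⟨η, -, hη⟩ := hQconv.exists_measure_lintegral_eq hQ0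
    (squeeze_zero hQ0 (fun k => by linarith [hh0 k]) hνlim)
  obtain ⟨τ, -, hτ⟩ := hconv.exists_measure_lintegral_eq hh0 (squeeze_zero hh0 hhν hνlim)
  have hsum : η + τ = ν := by
    refine measure_eq_of_lintegral_ofReal_sub_eq (fun k => ?_) fun k => ?_
    · rw [← ofReal_Ppot hν]
      exact ENNReal.ofReal_ne_top
    · rw [lintegral_add_measure, hη, hτ, ← ofReal_Ppot hν, ← ENNReal.ofReal_add (hQ0 k) (hh0 k),
        sub_add_cancel]
  have hην : η ≤ ν := hsum ▸ Measure.le_add_right le_rfl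
  have hηM : MemM η := hν.mono hην
  have hPη : ∀ k, Ppot η k = Ppot ν k - h k := fun k => by
    have := hη k
    rw [← ofReal_Ppot hηM] at this
    exact (ENNReal.ofReal_eq_ofReal_iff (Ppot_nonneg _ _) (hQ0 k)).1 this
  have hSmass : α.real univ = S.real univ := hαS.mass_eq hα hSM
  have hνmass : ν.real univ = S.real univ + ν'.real univ := measureReal_add_apply
  have hCanti : ∀ κ : Measure ℝ, MemM κ → ∀ k, 0 ≤ k → Cpot κ k ≤ Cpot κ 0 := fun κ hκ k hk =>
    integral_mono (integrable_max_sub_zero hκ k) (integrable_max_sub_zero hκ 0) fun y => by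
      dsimp only; gcongr
  have hmass1 : α.real univ ≤ η.real univ := by
    refine le_of_forall_mul_add_le (c := -∫ y, y ∂α) (d := Cpot η 0 - ∫ y, y ∂η) fun k hk => ?_
    have h1 := hQα k
    rw [← hPη k] at h1
    linarith [Cpot_eq hα k, Cpot_eq hηM k, Cpot_nonneg α k, hCanti η hηM k hk]
  have hmass2 : η.real univ ≤ α.real univ := by
    have hlin : ∀ y, ν'.real univ * y + (-∫ z, z ∂ν') ≤ h y :=
      hmax _ _ fun y => (by linarith [Cpot_eq hν' y, Cpot_nonneg ν' y] :
        _ ≤ Ppot ν' y).trans (hfν' y)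
    refine le_of_forall_mul_add_le (c := -∫ y, y ∂η)
      (d := Cpot ν 0 - ∫ y, y ∂ν + ∫ y, y ∂ν') fun k hk => ?_
    have h1 := hPη k
    have h2 : α.real univ * k = ν.real univ * k - ν'.real univ * k := by rw [hνmass, hSmass]; ring
    linarith [Cpot_eq hν k, Cpot_eq hηM k, Cpot_nonneg η k, hCanti ν hν k hk, hlin k]
  have hαη : LeCD α η := leCD_of_Ppot_le hα hηM (le_antisymm hmass1 hmass2) fun k => by
    rw [hPη]; exact hQα k
  have hSη := (hSmin η hηM hαη fun A _ => hην A).Ppot_le hSM hηM x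
  linarith [hmax a b hab x, hPη x, hPadd x]

lemma IsShadow.convexOn_le_Ppot {α S ν' : Measure ℝ} (hα : MemM α) (hν' : MemM ν')
    (hS : IsShadow α (S + ν') S) {g : ℝ → ℝ} (hg : ConvexOn ℝ univ g)
    (hle : ∀ x, g x ≤ Ppot (S + ν') x - Ppot α x) (x : ℝ) : g x ≤ Ppot ν' x := by
  refine le_of_forall_lt fun c hc => ?_
  obtain ⟨d, hcd, hdg⟩ := exists_between hc
  have hgc : Continuous g := continuousOn_univ.1 (hg.continuousOn isOpen_univ)
  obtain ⟨a, b, hab, rfl⟩ := hg.exists_affine_le_of_lt_real (mem_univ x) hdg isClosed_univ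
    (hgc.lowerSemicontinuous.lowerSemicontinuousOn _)
  exact hcd.trans_le (hS.affine_le_Ppot hα hν' (fun y => (hab y (mem_univ y)).trans (hle y)) x)

/-- Corollary 4.3: `c(u) = c(v)` iff `μ_v - μ_u` is in positive convex order
with `ν - S^ν(μ_u)`. -/
theorem c_constant_iff_lePC
    (μ ν : MeasureTheory.Measure ℝ)
    [MeasureTheory.IsProbabilityMeasure μ] [MeasureTheory.IsProbabilityMeasure ν]
    (hμ : MeasureTheory.Integrable (fun x : ℝ => x) μ)
    (hν : MeasureTheory.Integrable (fun x : ℝ => x) ν)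
    (hcd : LeCD μ ν)
    (u v : ℝ) (hu : u ∈ Set.Ioo (0:ℝ) 1) (hv : v ∈ Set.Ioo (0:ℝ) 1) (huv : u < v)
    (Su : MeasureTheory.Measure ℝ) (hSu : IsShadow (muU μ u) ν Su)
    (ρ : MeasureTheory.Measure ℝ) (hρ : MemM ρ) (hρsum : muU μ u + ρ = muU μ v)
    (ν' : MeasureTheory.Measure ℝ) (hν' : MemM ν') (hνsum : Su + ν' = ν) :
    (⨆ k : ℝ, (Cpot (muU μ u) k - Cpot ν k)) =
      (⨆ k : ℝ, (Cpot (muU μ v) k - Cpot ν k)) ↔ LePC ρ ν' := by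
  have hμM : MemM μ := ⟨inferInstance, hμ⟩
  have hνM : MemM ν := ⟨inferInstance, hν⟩
  have hα : MemM (muU μ u) := hμM.mono (muU_le μ hu)
  have hβ : MemM (muU μ v) := hμM.mono (muU_le μ hv)
  have hSM : MemM Su := hSu.1
  have := hα.1
  have := hρ.1
  have := hν'.1
  have := hSM.1
  have hαS : LeCD (muU μ u) Su := hSu.2.1
  set α := muU μ u
  set β := muU μ v
  have hPν : ∀ k, Ppot ν k = Ppot Su k + Ppot ν' k := by rw [← hνsum]; exact Ppot_add hSM hν'
  have hCν : ∀ k, Cpot ν k = Cpot Su k + Cpot ν' k := by rw [← hνsum]; exact Cpot_add hSM hν'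
  have hPβ : ∀ k, Ppot β k = Ppot α k + Ppot ρ k := by rw [← hρsum]; exact Ppot_add hα hρ
  have hCβ : ∀ k, Cpot β k = Cpot α k + Cpot ρ k := by rw [← hρsum]; exact Cpot_add hα hρ
  have hmS : α.real univ = Su.real univ := hαS.mass_eq hα hSM
  have hmν : Su.real univ + ν'.real univ = 1 := by
    rw [← measureReal_add_apply, hνsum, probReal_univ]
  have hmβ : α.real univ + ρ.real univ ≤ 1 := by
    rw [← measureReal_add_apply, hρsum, ← probReal_univ (μ := μ)]
    exact ENNReal.toReal_mono (measure_ne_top _ _) (muU_le μ hv univ)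
  have hPαS := hαS.Ppot_le hα hSM
  have hbdd : ∀ κ : Measure ℝ, κ ≤ μ → BddAbove (range fun k => Cpot κ k - Cpot ν k) := by
    intro κ hκ
    refine ⟨∫ x, x ∂μ - ∫ x, x ∂ν, ?_⟩
    rintro _ ⟨k, rfl⟩
    have h1 := Cpot_mono hμM hκ k
    have h2 := hcd.Ppot_le hμM hνM k
    have h3 := Cpot_eq hμM k
    have h4 := Cpot_eq hνM k
    rw [probReal_univ] at h3 h4
    dsimp only
    linarith
  have hbα := hbdd α (muU_le μ hu)
  have hbβ := hbdd β (muU_le μ hv)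
  set cα := ⨆ k : ℝ, (Cpot α k - Cpot ν k)
  have hcα_ge : ∀ k, Cpot α k - Cpot ν k ≤ cα := le_ciSup hbα
  have hdiff : ∀ k, Cpot α k - Cpot Su k ≤ ∫ x, x ∂α - ∫ x, x ∂Su := fun k => by
    have h1 := Cpot_eq hα k
    have h2 := Cpot_eq hSM k
    rw [hmS] at h1
    linarith [hPαS k]
  have hmean : ∫ x, x ∂ν = ∫ x, x ∂Su + ∫ x, x ∂ν' := by
    rw [← hνsum]; exact integral_add_measure hSM.2 hν'.2
  have hfC : ∀ k, Ppot ν k - Ppot α k = Cpot ν k - Cpot α k + ν'.real univ * k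
      - ∫ x, x ∂ν + ∫ x, x ∂α := fun k => by
    have h1 := Cpot_eq hα k
    have h2 := Cpot_eq hνM k
    have h3 : ν'.real univ * k = 1 * k - α.real univ * k := by rw [← hmν, hmS]; ring
    rw [probReal_univ] at h2
    linarith
  have hshadow : IsShadow α (Su + ν') Su := by rwa [hνsum]
  have hcα_eq : cα = ∫ x, x ∂α - ∫ x, x ∂Su := by
    refine le_antisymm (ciSup_le fun k => ?_) ?_
    · linarith [hdiff k, hCν k, Cpot_nonneg ν' k]
    · have hkey := hshadow.affine_le_Ppot hα hν' (a := ν'.real univ)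
        (b := -cα - ∫ x, x ∂ν + ∫ x, x ∂α) fun k => by
          rw [hνsum, hfC]
          linarith [hcα_ge k]
      have hlow : ∀ k, ∫ x, x ∂α - ∫ x, x ∂Su - cα ≤ Cpot ν' k := fun k => by
        linarith [hkey k, Cpot_eq hν' k]
      linarith [ge_of_tendsto' (tendsto_Cpot_atTop hν') hlow]
  constructor
  · intro hc
    have hPρ : ∀ k, Ppot ρ k ≤ Ppot ν' k :=
      hshadow.convexOn_le_Ppot hα hν' (convexOn_Ppot hρ) fun k => by
        have h1 := Ppot_mono hμM (muU_le μ hv) k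
        have h2 := hcd.Ppot_le hμM hνM k
        rw [hνsum]
        linarith [hPβ k]
    have hCρ : ∀ k, Cpot ρ k ≤ Cpot ν' k := fun k => by
      have hconv : ConvexOn ℝ univ fun y => Cpot ρ y + (ν'.real univ * y - ∫ x, x ∂ν') := by
        refine (convexOn_Cpot hρ).add ⟨convex_univ, fun x _ y _ s t _ _ hst => le_of_eq ?_⟩
        simp only [smul_eq_mul]
        linear_combination (∫ x, x ∂ν') * hst
      have h1 := hshadow.convexOn_le_Ppot hα hν' hconv (fun y => by
        have h2 := le_ciSup hbβ y
        rw [hνsum, hfC]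
        linarith [hCβ y]) k
      linarith [Cpot_eq hν' k]
    exact lePC_of_Ppot_le_of_Cpot_le hρ hν' (by linarith) hPρ hCρ
  · intro hpc
    refine le_antisymm (ciSup_mono hbβ fun k => ?_) (ciSup_le fun k => ?_)
    · linarith [hCβ k, Cpot_nonneg ρ k]
    · have h1 : Cpot ρ k ≤ Cpot ν' k := hpc _ (fun _ => le_max_right _ _)
        (convexOn_max_sub_zero k) (integrable_max_sub_zero hρ k) (integrable_max_sub_zero hν' k)
      linarith [hdiff k, hCβ k, hCν k]
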